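/- Let f : ℂ → ℂ → ℂ be any binary operation ('generalized fraction') such that (i) f a b = a / b whenever b ≠ 0 (it agrees with ordinary division for nonzero denominators), and (ii) f a b * f c d = f (a*c) (b*d) for all a, b, c, d ∈ ℂ (the product rule for fractions). Then f a 0 = 0 for every a ∈ ℂ; in particular the value of every fraction with denominator zero, including 1/0 and 0/0, is uniquely forced to be 0. -/

import Mathlib

/-- Takahasi's uniqueness theorem: any `generalized fraction` `f : ℂ → ℂ → ℂ`
agreeing with ordinary division for nonzero denominators and satisfying the
product rule `f a b * f c d = f (a*c) (b*d)` must satisfy `f a 0 = 0`. -/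
theorem takahasi_uniqueness
    (f : ℂ → ℂ → ℂ)
    (hdiv : ∀ a b : ℂ, b ≠ 0 → f a b = a / b)
    (hmul : ∀ a b c d : ℂ, f a b * f c d = f (a * c) (b * d)) :
    ∀ a : ℂ, f a 0 = 0 := by
  intro a
  have h := hmul a 0 1 2
  rw [hdiv 1 2 two_ne_zero, mul_one, zero_mul] at h
  linear_combination (-2) * h
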